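/- arXiv:2311.11049 — 3 statements merged into one kernel-verified Lean document; each statement's English description precedes it below -/
import Mathlib

section
/- There exists an irreducible projective α-representation of G on the complex vector space Fin (p ^ c.rank) → ℂ; that is, there is a function ρ : G → ((Fin (p ^ c.rank) → ℂ) →ₗ[ℂ] (Fin (p ^ c.rank) → ℂ)) with ρ 0 = LinearMap.id, ρ g ∘ₗ ρ h = α g h • ρ (g + h) for all g, h ∈ G, whose only invariant submodules are ⊥ and ⊤. -/
/-!
A bicharacter `A × B → kˣ`, viewed as a homomorphism `β : B →+ AddChar A k`, makes `A × B` act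
projectively on the functions on `β.range`, as in the Schrödinger model of a Heisenberg group: `A`
multiplies by evaluations of characters and `B` translates. If `β.range` is finite, this is
irreducible. Evaluations separate characters, so a function in an invariant subspace that is nonzero
at `φ` can be made to vanish at any `χ ≠ φ` by multiplying it with `s - s χ`, where `s` is an
evaluation with `s φ ≠ s χ`. Doing this for all `χ ≠ φ` leaves a multiple of the indicator of `φ`,
and translations permute the indicators transitively.

For `β v = (m ↦ ψ (π m ⬝ᵥ c *ᵥ v))`, with `ψ` primitive and `π` surjective, the range of `β` is a
copy of the column space of `c`, so the dimension is the cardinality of that column space.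
-/

/-- The bilinear 2-cocycle `α (m,k) (m',k') = ξ ^ (∑ i ∑ j, c i j * πᵢ (m' i) * k j)`
on `G = (Π i, ZMod (p ^ r i)) × (Fin s → ZMod p)`, where `πᵢ : ZMod (p ^ r i) →+* ZMod p`
is the natural projection. -/
noncomputable def bilinAlpha (p : ℕ) {t s : ℕ} (r : Fin t → ℕ) (hr : ∀ i, 1 ≤ r i)
    (c : Matrix (Fin t) (Fin s) (ZMod p)) (ξ : ℂˣ)
    (g h : (∀ i : Fin t, ZMod (p ^ r i)) × (Fin s → ZMod p)) : ℂˣ :=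
  ξ ^ (∑ i, ∑ j, c i j *
      ZMod.castHom (dvd_pow_self p (Nat.one_le_iff_ne_zero.mp (hr i))) (ZMod p) (h.1 i) *
      g.2 j).val

open Matrix

section IrreducibleProjectiveRep

variable {G k V V' : Type*} [Add G] [Zero G] [CommSemiring k] [AddCommMonoid V] [Module k V]
  [AddCommMonoid V'] [Module k V']

/-- Irreducible projective representations of an additive group `G` with factor set `α`. The factor
set is `k`-valued and not assumed to be a cocycle, and invariant submodules are expressed through
`Module.End.invtSubmodule`. -/
structure IsIrreducibleProjectiveRep (α : G → G → k) (ρ : G → Module.End k V) : Prop where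
  map_zero : ρ 0 = LinearMap.id
  comp_eq_smul : ∀ g h, ρ g ∘ₗ ρ h = α g h • ρ (g + h)
  nontrivial : Nontrivial V
  eq_bot_or_eq_top :
    ∀ W : Submodule k V, (∀ g, W ∈ (ρ g).invtSubmodule) → W = ⊥ ∨ W = ⊤

theorem IsIrreducibleProjectiveRep.conj {α : G → G → k} {ρ : G → Module.End k V}
    (hρ : IsIrreducibleProjectiveRep α ρ) (e : V ≃ₗ[k] V') :
    IsIrreducibleProjectiveRep α fun g ↦ e.conj (ρ g) where
  map_zero := by rw [hρ.map_zero, LinearEquiv.conj_id]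
  comp_eq_smul g h := by rw [← LinearEquiv.conj_comp, hρ.comp_eq_smul, map_smul]
  nontrivial := have := hρ.nontrivial; e.symm.nontrivial
  eq_bot_or_eq_top W hW := by
    obtain ⟨U, rfl⟩ := (Submodule.orderIsoMapComap e).surjective W
    simpa using hρ.eq_bot_or_eq_top U fun g ↦ e.map_mem_invtSubmodule_conj_iff.mp (hW g)

end IrreducibleProjectiveRep

section SeparatesPoints

variable {X k : Type*} {S : Set (X → k)} {f : X → k} {x : X}

theorem exists_mem_apply_ne_zero_of_separatesPoints [CommRing k] [IsDomain k]
    {W : Submodule k (X → k)} (hS : S.SeparatesPoints) (hW : ∀ s ∈ S, ∀ f ∈ W, s * f ∈ W)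
    (hf : f ∈ W) (hfx : f x ≠ 0) (T : Finset X) (hxT : x ∉ T) :
    ∃ g ∈ W, g x ≠ 0 ∧ ∀ y ∈ T, g y = 0 := by
  classical
  induction T using Finset.induction_on with
  | empty => exact ⟨f, hf, hfx, by simp⟩
  | insert y T _ ih =>
    obtain ⟨hxy, hxT⟩ : x ≠ y ∧ x ∉ T := by simpa using hxT
    obtain ⟨g, hg, hgx, hgT⟩ := ih hxT
    obtain ⟨s, hs, hsxy⟩ := hS hxy
    refine ⟨s * g - s y • g, W.sub_mem (hW s hs g hg) (W.smul_mem _ hg), ?_, ?_⟩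
    · simpa [← sub_mul] using ⟨sub_ne_zero.mpr hsxy, hgx⟩
    · simp +contextual [hgT]

theorem single_one_mem_of_separatesPoints [Field k] [Finite X] [DecidableEq X]
    {W : Submodule k (X → k)} (hS : S.SeparatesPoints) (hW : ∀ s ∈ S, ∀ f ∈ W, s * f ∈ W)
    (hf : f ∈ W) (hfx : f x ≠ 0) : Pi.single x 1 ∈ W := by
  have := Fintype.ofFinite X
  obtain ⟨g, hg, hgx, hg_zero⟩ := exists_mem_apply_ne_zero_of_separatesPoints hS hW hf hfx
    (Finset.univ.erase x) (by simp)
  have g_eq : g = g x • Pi.single x 1 := by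
    ext y
    obtain rfl | hyx := eq_or_ne y x
    · simp
    · simp [hyx, hg_zero]
  exact (W.smul_mem_iff hgx).mp (g_eq ▸ hg)

end SeparatesPoints

section Schrodinger

variable {A B k : Type*} [AddCommGroup A] [AddCommGroup B]

theorem separatesPoints_range_addChar_eval [CommMonoid k] (H : AddSubgroup (AddChar A k)) :
    (Set.range fun (a : A) (φ : H) ↦ φ.1 a).SeparatesPoints := by
  intro φ χ hne
  obtain ⟨a, ha⟩ := DFunLike.ne_iff.mp (Subtype.coe_injective.ne hne)
  exact ⟨_, ⟨a, rfl⟩, ha⟩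

/-- The Schrödinger model of the projective representation of `A × B` attached to a bicharacter
`β : B →+ AddChar A k`: on functions on `β.range`, the factor `A` acts by multiplication with
evaluations and `B` by translation. -/
def schrodingerRep [CommSemiring k] (β : B →+ AddChar A k) (g : A × B) :
    Module.End k (β.range → k) :=
  LinearMap.mulLeft k (fun φ : β.range ↦ φ.1 g.1) ∘ₗ
    LinearMap.funLeft k k (· + β.rangeRestrict g.2)

section CommSemiring

variable [CommSemiring k] (β : B →+ AddChar A k)

theorem schrodingerRep_apply (g : A × B) (f : β.range → k) (φ : β.range) :
    schrodingerRep β g f φ = φ.1 g.1 * f (φ + β.rangeRestrict g.2) :=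
  rfl

theorem schrodingerRep_zero : schrodingerRep β 0 = LinearMap.id := by
  ext
  simp [schrodingerRep_apply]

theorem schrodingerRep_comp (g h : A × B) :
    schrodingerRep β g ∘ₗ schrodingerRep β h = β g.2 h.1 • schrodingerRep β (g + h) := by
  refine LinearMap.ext fun f ↦ funext fun φ ↦ ?_
  simp only [LinearMap.comp_apply, LinearMap.smul_apply, Pi.smul_apply, smul_eq_mul,
    schrodingerRep_apply, Prod.fst_add, Prod.snd_add, map_add, AddSubgroup.coe_add,
    AddMonoidHom.coe_rangeRestrict, AddChar.add_apply, AddChar.map_add_eq_mul, add_assoc]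
  ring

theorem schrodingerRep_mk_zero (a : A) (f : β.range → k) :
    schrodingerRep β (a, 0) f = (fun φ ↦ φ.1 a) * f := by
  ext
  simp [schrodingerRep_apply]

theorem schrodingerRep_zero_mk_single_one [DecidableEq β.range] (b : B) (φ : β.range) :
    schrodingerRep β (0, b) (Pi.single φ 1) = Pi.single (φ - β.rangeRestrict b) 1 := by
  ext χ
  simp [schrodingerRep_apply, Pi.single_apply, eq_sub_iff_add_eq]

end CommSemiring

variable [Field k] (β : B →+ AddChar A k) [Finite β.range]

theorem schrodingerRep_eq_bot_or_eq_top (W : Submodule k (β.range → k))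
    (hW : ∀ g, W ∈ (schrodingerRep β g).invtSubmodule) : W = ⊥ ∨ W = ⊤ := by
  classical
  refine or_iff_not_imp_left.mpr fun hbot ↦ ?_
  obtain ⟨f, hf, hf_ne⟩ := W.exists_mem_ne_zero_of_ne_bot hbot
  obtain ⟨φ, hfφ⟩ := Function.ne_iff.mp hf_ne
  have mul_eval_mem : ∀ s ∈ Set.range fun (a : A) (φ : β.range) ↦ φ.1 a, ∀ f ∈ W, s * f ∈ W := by
    rintro _ ⟨a, rfl⟩ f hf
    exact schrodingerRep_mk_zero β a f ▸ hW (a, 0) hf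
  have single_mem : Pi.single φ 1 ∈ W :=
    single_one_mem_of_separatesPoints (separatesPoints_range_addChar_eval _) mul_eval_mem hf hfφ
  have all_single_mem (χ : β.range) : Pi.single χ 1 ∈ W := by
    obtain ⟨b, hb⟩ := β.rangeRestrict_surjective (φ - χ)
    simpa [schrodingerRep_zero_mk_single_one, hb] using hW (0, b) single_mem
  rw [eq_top_iff, ← (Pi.basisFun k β.range).span_eq, Submodule.span_le]
  rintro _ ⟨χ, rfl⟩
  simpa using all_single_mem χ

theorem isIrreducibleProjectiveRep_schrodingerRep :
    IsIrreducibleProjectiveRep (fun g h ↦ β g.2 h.1) (schrodingerRep β) where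
  map_zero := schrodingerRep_zero β
  comp_eq_smul := schrodingerRep_comp β
  nontrivial := inferInstance
  eq_bot_or_eq_top := schrodingerRep_eq_bot_or_eq_top β

end Schrodinger

section DotProduct

variable {A F M ι κ : Type*} [CommMonoid M] [Fintype ι]

/-- The character `a ↦ ψ (π a ⬝ᵥ v)` of `A`, as a homomorphism in `v`. It turns matrices into
bicharacters. -/
def dotProductAddChar [AddMonoid A] [NonUnitalNonAssocSemiring F] (ψ : AddChar F M)
    (π : A →+ ι → F) : (ι → F) →+ AddChar A M where
  toFun v :=
    { toFun := fun a ↦ ψ (π a ⬝ᵥ v)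
      map_zero_eq_one' := by simp
      map_add_eq_mul' := by simp [add_dotProduct, AddChar.map_add_eq_mul] }
  map_zero' := by ext; simp
  map_add' v w := by ext; simp [dotProduct_add, AddChar.map_add_eq_mul]

theorem dotProductAddChar_apply [AddMonoid A] [NonUnitalNonAssocSemiring F] (ψ : AddChar F M)
    (π : A →+ ι → F) (v : ι → F) (a : A) : dotProductAddChar ψ π v a = ψ (π a ⬝ᵥ v) :=
  rfl

theorem dotProductAddChar_injective [AddMonoid A] [CommRing F] {ψ : AddChar F M}
    (hψ : ψ.IsPrimitive) {π : A →+ ι → F} (hπ : Function.Surjective π) :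
    Function.Injective (dotProductAddChar ψ π) := by
  classical
  refine fun v w hvw ↦ funext fun i ↦ AddChar.to_mulShift_inj_of_isPrimitive hψ ?_
  ext x
  obtain ⟨a, ha⟩ := hπ (Pi.single i x)
  simpa [dotProductAddChar_apply, ha, mul_comm x] using DFunLike.congr_fun hvw a

theorem natCard_range_dotProductAddChar_comp [AddCommGroup A] [Field F] [Fintype κ]
    {ψ : AddChar F M} (hψ : ψ.IsPrimitive) {π : A →+ ι → F} (hπ : Function.Surjective π)
    (c : Matrix ι κ F) :
    Nat.card ((dotProductAddChar ψ π).comp c.mulVecLin.toAddMonoidHom).range =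
      Nat.card F ^ c.rank := by
  rw [AddMonoidHom.range_comp,
    AddSubgroup.card_map_of_injective (dotProductAddChar_injective hψ hπ)]
  exact Module.natCard_eq_pow_finrank (V := LinearMap.range c.mulVecLin)

end DotProduct

theorem exists_irreducible_projective_rep_general {A F k ι κ : Type*} [AddCommGroup A] [Field F]
    [Finite F] [Field k] [Fintype ι] [Fintype κ] {π : A →+ ι → F} (hπ : Function.Surjective π)
    {ψ : AddChar F k} (hψ : ψ.IsPrimitive) (c : Matrix ι κ F) :
    ∃ ρ : A × (κ → F) → Module.End k (Fin (Nat.card F ^ c.rank) → k),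
      IsIrreducibleProjectiveRep (fun g h ↦ ψ (π h.1 ⬝ᵥ c *ᵥ g.2)) ρ := by
  let β := (dotProductAddChar ψ π).comp c.mulVecLin.toAddMonoidHom
  have card_range : Nat.card β.range = Nat.card F ^ c.rank :=
    natCard_range_dotProductAddChar_comp hψ hπ c
  have : Finite β.range := inferInstanceAs (Finite (Set.range β))
  let e : β.range ≃ Fin (Nat.card F ^ c.rank) := Finite.equivFinOfCardEq card_range
  exact ⟨_, (isIrreducibleProjectiveRep_schrodingerRep β).conj
    (LinearEquiv.funCongrLeft k k e.symm)⟩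

section ZMod

variable {ι : Type*} {p : ℕ} {r : ι → ℕ}

/-- The reduction `(m i)ᵢ ↦ (πᵢ (m i))ᵢ` modulo `p`. -/
def piReduction (hr : ∀ i, 1 ≤ r i) : (∀ i, ZMod (p ^ r i)) →+ ι → ZMod p :=
  AddMonoidHom.mk' (fun m i ↦
      ZMod.castHom (dvd_pow_self p (Nat.one_le_iff_ne_zero.mp (hr i))) (ZMod p) (m i))
    fun _ _ ↦ funext fun _ ↦ map_add _ _ _

theorem piReduction_surjective (hr : ∀ i, 1 ≤ r i) :
    Function.Surjective (piReduction (p := p) hr) :=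
  Function.Surjective.piMap fun i ↦
    ZMod.castHom_surjective (dvd_pow_self p (Nat.one_le_iff_ne_zero.mp (hr i)))

theorem coe_bilinAlpha [NeZero p] {t s : ℕ} {r : Fin t → ℕ} (hr : ∀ i, 1 ≤ r i)
    (c : Matrix (Fin t) (Fin s) (ZMod p)) {ξ : ℂˣ} (hξ : (ξ : ℂ) ^ p = 1)
    (g h : (∀ i : Fin t, ZMod (p ^ r i)) × (Fin s → ZMod p)) :
    (bilinAlpha p r hr c ξ g h : ℂ) =
      AddChar.zmodChar p hξ (piReduction hr h.1 ⬝ᵥ c *ᵥ g.2) := by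
  rw [bilinAlpha, Units.val_pow_eq_pow_val, AddChar.zmodChar_apply]
  simp only [dotProduct, mulVec, Finset.mul_sum, piReduction, AddMonoidHom.mk'_apply,
    mul_left_comm, mul_assoc]

end ZMod

theorem exists_irreducible_projective_rep (p t s : ℕ) (hp : p.Prime) (ht : 1 ≤ t) (hs : 1 ≤ s)
    (r : Fin t → ℕ) (hr : ∀ i, 1 ≤ r i)
    (c : Matrix (Fin t) (Fin s) (ZMod p)) (ξ : ℂˣ) (hξ : IsPrimitiveRoot ξ p) :
    ∃ ρ : ((∀ i : Fin t, ZMod (p ^ r i)) × (Fin s → ZMod p)) →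
        ((Fin (p ^ c.rank) → ℂ) →ₗ[ℂ] (Fin (p ^ c.rank) → ℂ)),
      ρ 0 = LinearMap.id ∧
      (∀ g h, ρ g ∘ₗ ρ h = (bilinAlpha p r hr c ξ g h : ℂ) • ρ (g + h)) ∧
      (∀ W : Submodule ℂ (Fin (p ^ c.rank) → ℂ),
        (∀ g, (ρ g) '' (W : Set (Fin (p ^ c.rank) → ℂ)) ⊆ (W : Set (Fin (p ^ c.rank) → ℂ))) →
          W = ⊥ ∨ W = ⊤) := by
  have : Fact p.Prime := ⟨hp⟩
  have hξ' : IsPrimitiveRoot (ξ : ℂ) p := IsPrimitiveRoot.coe_units_iff.mpr hξ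
  obtain ⟨ρ, hρ⟩ := Nat.card_zmod p ▸ exists_irreducible_projective_rep_general
    (piReduction_surjective hr) (AddChar.zmodChar_primitive_of_primitive_root p hξ') c
  exact ⟨ρ, hρ.map_zero, fun g h ↦ coe_bilinAlpha hr c hξ'.pow_eq_one g h ▸ hρ.comp_eq_smul g h,
    fun W hW ↦ hρ.eq_bot_or_eq_top W fun g f hf ↦ hW g ⟨f, hf, rfl⟩⟩
end

section
/- Let p be a prime and let B : Matrix (Fin t) (Fin s) (ZMod p) have rank n over the field ZMod p. For D : Fin s → ZMod p let B' D : Matrix (Fin (t + 1)) (Fin s) (ZMod p) be the matrix whose first t rows are those of B and whose last row is D. Then the number of D with (B' D).rank = n equals p ^ n, and the number of D with (B' D).rank = n + 1 equals p ^ n * (p ^ (s - n) - 1); moreover every D yields (B' D).rank = n or n + 1. -/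
/-!
Appending a row to `B` leaves the rank unchanged when the new row lies in the row space `V` of `B`,
and raises it by one otherwise. So the two counts are the sizes of `V`, a subspace of dimension
`rank B`, and of its complement.
-/

open Module Submodule

section Submodule

variable {K E : Type*} [DivisionRing K] [AddCommGroup E] [Module K E]

theorem natCard_notMem_submodule [Finite E] (V : Submodule K E) :
    Nat.card {x // x ∉ V} =
      Nat.card K ^ finrank K V * (Nat.card K ^ (finrank K E - finrank K V) - 1) := by
  have card_compl : Nat.card {x // x ∉ V} = Nat.card E - Nat.card V :=
    Set.ncard_compl (V : Set E)
  rw [card_compl, natCard_eq_pow_finrank (K := K) (V := E),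
    natCard_eq_pow_finrank (K := K) (V := V), Nat.mul_sub, mul_one, ← pow_add,
    Nat.add_sub_cancel' V.finrank_le]

end Submodule

section SnocRow

variable {K ι : Type*} {t : ℕ}

/-- The matrix obtained from `B` by appending `D` as a new last row. -/
def snocRow (B : Matrix (Fin t) ι K) (D : ι → K) : Matrix (Fin (t + 1)) ι K :=
  Matrix.of (Fin.snoc (fun i => B i) D)

theorem range_row_snocRow (B : Matrix (Fin t) ι K) (D : ι → K) :
    Set.range (snocRow B D).row = insert D (Set.range B.row) :=
  Fin.range_snoc B.row D

variable [Field K] [Fintype ι] {B : Matrix (Fin t) ι K} {D : ι → K}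

theorem rank_snocRow (B : Matrix (Fin t) ι K) (D : ι → K) :
    (snocRow B D).rank = finrank K ↥(span K (Set.range B.row) ⊔ span K {D}) := by
  rw [Matrix.rank_eq_finrank_span_row, range_row_snocRow, span_insert, sup_comm]

theorem rank_snocRow_of_mem (hD : D ∈ span K (Set.range B.row)) :
    (snocRow B D).rank = B.rank := by
  rw [rank_snocRow, sup_eq_left.mpr ((span_singleton_le_iff_mem _ _).mpr hD),
    Matrix.rank_eq_finrank_span_row]

theorem rank_snocRow_of_notMem (hD : D ∉ span K (Set.range B.row)) :
    (snocRow B D).rank = B.rank + 1 := by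
  rw [rank_snocRow, finrank_sup_span_singleton hD, Matrix.rank_eq_finrank_span_row]

theorem rank_snocRow_eq_rank_iff :
    (snocRow B D).rank = B.rank ↔ D ∈ span K (Set.range B.row) where
  mp h := by
    by_contra hD
    exact B.rank.succ_ne_self ((rank_snocRow_of_notMem hD).symm.trans h)
  mpr := rank_snocRow_of_mem

theorem rank_snocRow_eq_rank_add_one_iff :
    (snocRow B D).rank = B.rank + 1 ↔ D ∉ span K (Set.range B.row) where
  mp h hD := B.rank.succ_ne_self (h.symm.trans (rank_snocRow_of_mem hD))
  mpr := rank_snocRow_of_notMem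

theorem rank_snocRow_eq_rank_or_eq_rank_add_one (B : Matrix (Fin t) ι K) (D : ι → K) :
    (snocRow B D).rank = B.rank ∨ (snocRow B D).rank = B.rank + 1 :=
  (em (D ∈ span K (Set.range B.row))).imp rank_snocRow_of_mem rank_snocRow_of_notMem

theorem natCard_rank_snocRow_eq_rank (B : Matrix (Fin t) ι K) :
    Nat.card {D // (snocRow B D).rank = B.rank} = Nat.card K ^ B.rank := by
  simp only [rank_snocRow_eq_rank_iff]
  rw [Matrix.rank_eq_finrank_span_row B]
  exact natCard_eq_pow_finrank

theorem natCard_rank_snocRow_eq_rank_add_one [Finite K] (B : Matrix (Fin t) ι K) :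
    Nat.card {D // (snocRow B D).rank = B.rank + 1} =
      Nat.card K ^ B.rank * (Nat.card K ^ (Fintype.card ι - B.rank) - 1) := by
  simp only [rank_snocRow_eq_rank_add_one_iff]
  rw [natCard_notMem_submodule, finrank_fintype_fun_eq_card, Matrix.rank_eq_finrank_span_row B]

theorem count_row_extensions_by_rank_general [Finite K] (B : Matrix (Fin t) ι K) :
    Nat.card {D // (snocRow B D).rank = B.rank} = Nat.card K ^ B.rank ∧
    Nat.card {D // (snocRow B D).rank = B.rank + 1} =
      Nat.card K ^ B.rank * (Nat.card K ^ (Fintype.card ι - B.rank) - 1) ∧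
    ∀ D, (snocRow B D).rank = B.rank ∨ (snocRow B D).rank = B.rank + 1 :=
  ⟨natCard_rank_snocRow_eq_rank B, natCard_rank_snocRow_eq_rank_add_one B,
    rank_snocRow_eq_rank_or_eq_rank_add_one B⟩

end SnocRow

theorem count_row_extensions_by_rank
    (p t s n : ℕ) (hp : p.Prime) (B : Matrix (Fin t) (Fin s) (ZMod p)) (hB : B.rank = n) :
    Nat.card {D : Fin s → ZMod p //
        (Matrix.of (Fin.snoc (fun i => B i) D) : Matrix (Fin (t + 1)) (Fin s) (ZMod p)).rank = n}
      = p ^ n ∧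
    Nat.card {D : Fin s → ZMod p //
        (Matrix.of (Fin.snoc (fun i => B i) D) : Matrix (Fin (t + 1)) (Fin s) (ZMod p)).rank
          = n + 1}
      = p ^ n * (p ^ (s - n) - 1) ∧
    (∀ D : Fin s → ZMod p,
      (Matrix.of (Fin.snoc (fun i => B i) D) : Matrix (Fin (t + 1)) (Fin s) (ZMod p)).rank = n ∨
      (Matrix.of (Fin.snoc (fun i => B i) D) : Matrix (Fin (t + 1)) (Fin s) (ZMod p)).rank
        = n + 1) := by
  have : Fact p.Prime := ⟨hp⟩
  subst hB
  simpa only [snocRow, Nat.card_zmod, Fintype.card_fin] using count_row_extensions_by_rank_general B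
end

section
/- Let p be a prime and m, n, r natural numbers with r ≤ m. The number of matrices A : Matrix (Fin m) (Fin n) (ZMod p) of rank r over the field ZMod p equals (∏_{j=1}^{r} (p ^ n - p ^ (j - 1))) * (Σ p ^ (Σ_{i=1}^{r} i * jᵢ)), where the outer sum ranges over all r-tuples (j₁, …, j_r) of natural numbers with j₁ + ⋯ + j_r ≤ m - r. -/
/-!
Build an `m × n` matrix over a field with `q` elements row by row. A new row keeps the rank `r + 1`
if it lies in the span of the previous rows, which has `q ^ (r + 1)` elements, and raises the rank
from `r` to `r + 1` if it is one of the `q ^ n - q ^ r` vectors outside their span. The number of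
matrices of given rank therefore satisfies a Pascal-type recurrence. Up to the factor
`∏ j < r, (q ^ n - q ^ j)` it is the recurrence satisfied by the sum of all monomials of degree at
most `m - r` in `q, q ^ 2, …, q ^ r`: the exponent of `q ^ i` in a monomial records how many rows
were added without raising the rank from `i`.
-/

section MonomialSums

/-- The exponent vectors of the monomials of total degree at most `d` in `r` variables. The bound on
the individual entries only serves to make the set a `Finset`. -/
def boundedTuples (r d : ℕ) : Finset (Fin r → ℕ) :=
  Finset.filter (fun j : Fin r → ℕ => ∑ i, j i ≤ d)
    (Fintype.piFinset fun _ : Fin r => Finset.range (d + 1))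

lemma mem_boundedTuples {r d : ℕ} {j : Fin r → ℕ} : j ∈ boundedTuples r d ↔ ∑ i, j i ≤ d := by
  simp only [boundedTuples, Finset.mem_filter, Fintype.mem_piFinset, Finset.mem_range,
    Nat.lt_succ_iff, and_iff_right_iff_imp]
  exact fun hj i => (Finset.single_le_sum_of_canonicallyOrdered (Finset.mem_univ i)).trans hj

lemma boundedTuples_zero_right (r : ℕ) : boundedTuples r 0 = {0} := by
  ext j
  simp [mem_boundedTuples, funext_iff]

variable {R : Type*} [CommSemiring R] {r : ℕ}

/-- The sum of all monomials of degree at most `d` evaluated at `x`, that is, the complete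
homogeneous symmetric polynomial of degree `d` evaluated at `1, x 0, …, x (r - 1)`. -/
def boundedMonomialSum (x : Fin r → R) (d : ℕ) : R :=
  ∑ j ∈ boundedTuples r d, ∏ i, x i ^ j i

lemma boundedMonomialSum_fin_zero (x : Fin 0 → R) (d : ℕ) : boundedMonomialSum x d = 1 := by
  simp [boundedMonomialSum, boundedTuples]

lemma boundedMonomialSum_zero (x : Fin r → R) : boundedMonomialSum x 0 = 1 := by
  simp [boundedMonomialSum, boundedTuples_zero_right]

lemma boundedMonomialSum_eq_sum_init (x : Fin (r + 1) → R) (d : ℕ) :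
    boundedMonomialSum x d =
      ∑ k ∈ Finset.range (d + 1), x (Fin.last r) ^ k * boundedMonomialSum (Fin.init x) (d - k) := by
  simp only [boundedMonomialSum, Finset.mul_sum]
  rw [Finset.sum_sigma']
  refine Finset.sum_nbij' (fun j => ⟨j (Fin.last r), Fin.init j⟩) (fun t => Fin.snoc t.2 t.1)
    (fun j hj => ?_) (fun t ht => ?_) (fun j _ => Fin.snoc_init_self j) (fun t _ => by simp)
    (fun j _ => ?_)
  · rw [mem_boundedTuples, Fin.sum_univ_castSucc] at hj
    simp only [Finset.mem_sigma, Finset.mem_range, mem_boundedTuples, Fin.init]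
    lia
  · simp only [Finset.mem_sigma, Finset.mem_range, mem_boundedTuples] at ht
    simp only [mem_boundedTuples, Fin.sum_univ_castSucc, Fin.snoc_castSucc, Fin.snoc_last]
    lia
  · simp only [Fin.prod_univ_castSucc, Fin.init, mul_comm]

lemma boundedMonomialSum_succ (x : Fin (r + 1) → R) (d : ℕ) :
    boundedMonomialSum x (d + 1) =
      x (Fin.last r) * boundedMonomialSum x d + boundedMonomialSum (Fin.init x) (d + 1) := by
  rw [boundedMonomialSum_eq_sum_init x (d + 1), boundedMonomialSum_eq_sum_init x d,
    Finset.sum_range_succ', Finset.mul_sum]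
  simp only [pow_succ', mul_assoc, Nat.add_sub_add_right, pow_zero, one_mul, Nat.sub_zero]

lemma boundedMonomialSum_pow (q : R) (r d : ℕ) :
    boundedMonomialSum (fun i : Fin r => q ^ (i.val + 1)) d =
      ∑ j ∈ boundedTuples r d, q ^ (∑ i : Fin r, (i.val + 1) * j i) := by
  simp only [boundedMonomialSum, ← pow_mul, Finset.prod_pow_eq_pow_sum]

end MonomialSums

section TuplesOfVectors

variable {K V : Type*} [DivisionRing K] [AddCommGroup V] [Module K V]

lemma finrank_insert_of_mem_span {s : Set V} {x : V} (hx : x ∈ Submodule.span K s) :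
    Set.finrank K (insert x s) = Set.finrank K s := by
  rw [Set.finrank, Submodule.span_insert_eq_span hx, Set.finrank]

lemma finrank_insert_of_notMem_span [Module.Finite K V] {s : Set V} {x : V}
    (hx : x ∉ Submodule.span K s) : Set.finrank K (insert x s) = Set.finrank K s + 1 := by
  rw [Set.finrank, Submodule.span_insert, sup_comm, Submodule.finrank_sup_span_singleton hx,
    Set.finrank]

lemma natCard_span [Module.Finite K V] (s : Set V) :
    Nat.card (Submodule.span K s) = Nat.card K ^ Set.finrank K s :=
  Module.natCard_eq_pow_finrank

variable (K) in
lemma natCard_tuples_finrank_zero [Module.Finite K V] {ι : Type*} :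
    Nat.card {v : ι → V // Set.finrank K (Set.range v) = 0} = 1 := by
  have finrank_eq_zero_iff (v : ι → V) : Set.finrank K (Set.range v) = 0 ↔ v = 0 := by
    rw [Set.finrank, Submodule.finrank_eq_zero, Submodule.span_eq_bot, Set.forall_mem_range,
      funext_iff]
    rfl
  simp [finrank_eq_zero_iff]

variable (K V) in
lemma natCard_tuples_finrank_of_lt {m r : ℕ} (h : m < r) :
    Nat.card {v : Fin m → V // Set.finrank K (Set.range v) = r} = 0 := by
  have : IsEmpty {v : Fin m → V // Set.finrank K (Set.range v) = r} :=
    ⟨fun v => by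
      have finrank_le : Set.finrank K (Set.range v.1) ≤ m := by
        simpa using finrank_range_le_card (R := K) v.1
      lia⟩
  exact Nat.card_of_isEmpty

variable [Finite V]

lemma natCard_notMem_span (s : Set V) :
    Nat.card {x // x ∉ Submodule.span K s} = Nat.card V - Nat.card K ^ Set.finrank K s := by
  rw [← natCard_span]
  exact Set.ncard_compl (Submodule.span K s : Set V)

lemma natCard_finrank_insert_eq_succ (s : Set V) (r : ℕ) :
    Nat.card {x // Set.finrank K (insert x s) = r + 1} =
      (if Set.finrank K s = r + 1 then Nat.card K ^ (r + 1) else 0) +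
        if Set.finrank K s = r then Nat.card V - Nat.card K ^ r else 0 := by
  have finrank_insert (x : V) : Set.finrank K (insert x s) = r + 1 ↔
      x ∈ Submodule.span K s ∧ Set.finrank K s = r + 1 ∨
        x ∉ Submodule.span K s ∧ Set.finrank K s = r := by
    by_cases hx : x ∈ Submodule.span K s
    · simp [hx, finrank_insert_of_mem_span hx]
    · simp [hx, finrank_insert_of_notMem_span hx]
  simp only [finrank_insert]
  rcases eq_or_ne (Set.finrank K s) (r + 1) with h | h
  · simpa [h] using natCard_span (K := K) s
  · rcases eq_or_ne (Set.finrank K s) r with h' | h'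
    · simpa [h'] using natCard_notMem_span (K := K) s
    · simp [h, h']

variable (K V)

lemma natCard_tuples_succ_finrank_succ (m r : ℕ) :
    Nat.card {v : Fin (m + 1) → V // Set.finrank K (Set.range v) = r + 1} =
      Nat.card K ^ (r + 1) * Nat.card {v : Fin m → V // Set.finrank K (Set.range v) = r + 1} +
        (Nat.card V - Nat.card K ^ r) *
          Nat.card {v : Fin m → V // Set.finrank K (Set.range v) = r} := by
  classical
  have := Fintype.ofFinite V
  let e : (Σ v : Fin m → V, {x // Set.finrank K (insert x (Set.range v)) = r + 1}) ≃
      {v : Fin (m + 1) → V // Set.finrank K (Set.range v) = r + 1} :=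
    (Equiv.subtypeProdEquivSigmaSubtype _).symm.trans <|
      ((Equiv.prodComm _ _).trans (Fin.consEquiv fun _ => V)).subtypeEquiv fun _ => by
        simp [Fin.consEquiv, Fin.range_cons]
  have sum_ite (c k : ℕ) : (∑ v : Fin m → V, if Set.finrank K (Set.range v) = k then c else 0) =
      c * Nat.card {v : Fin m → V // Set.finrank K (Set.range v) = k} := by
    rw [← Finset.sum_filter, Finset.sum_const, smul_eq_mul, mul_comm, Nat.card_eq_fintype_card,
      Fintype.card_subtype]
  rw [← Nat.card_congr e, Nat.card_sigma]
  simp only [natCard_finrank_insert_eq_succ, Finset.sum_add_distrib, sum_ite]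

theorem natCard_tuples_finrank_eq (r d : ℕ) :
    Nat.card {v : Fin (r + d) → V // Set.finrank K (Set.range v) = r} =
      (∏ j ∈ Finset.range r, (Nat.card V - Nat.card K ^ j)) *
        boundedMonomialSum (fun i : Fin r => Nat.card K ^ (i.val + 1)) d := by
  induction r generalizing d with
  | zero =>
    rw [natCard_tuples_finrank_zero, boundedMonomialSum_fin_zero, Finset.prod_range_zero, one_mul]
  | succ r ihr =>
    rw [Finset.prod_range_succ]
    induction d with
    | zero =>
      have card_full_rank : Nat.card {v : Fin r → V // Set.finrank K (Set.range v) = r} =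
          ∏ j ∈ Finset.range r, (Nat.card V - Nat.card K ^ j) :=
        (ihr 0).trans (by rw [boundedMonomialSum_zero, mul_one])
      rw [add_zero, natCard_tuples_succ_finrank_succ,
        natCard_tuples_finrank_of_lt K V r.lt_succ_self, card_full_rank, boundedMonomialSum_zero]
      ring
    | succ d ihd =>
      rw [← add_assoc, natCard_tuples_succ_finrank_succ, ihd, Nat.add_right_comm r 1 d,
        add_assoc r d 1, ihr (d + 1), boundedMonomialSum_succ]
      simp only [Fin.val_last, Fin.init_def, Fin.val_castSucc]
      ring

end TuplesOfVectors

-- The truncated subtraction is harmless: for `r > Nat.card κ` the factor `j = Nat.card κ` vanishes.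
theorem count_matrices_of_rank_general {K ι κ : Type*} [Field K] [Finite K] [Finite ι] [Fintype κ]
    {r : ℕ} (hr : r ≤ Nat.card ι) :
    Nat.card {A : Matrix ι κ K // A.rank = r} =
      (∏ j ∈ Finset.range r, (Nat.card K ^ Nat.card κ - Nat.card K ^ j)) *
        ∑ j ∈ Finset.filter (fun j : Fin r → ℕ => ∑ i, j i ≤ Nat.card ι - r)
            (Fintype.piFinset fun _ : Fin r => Finset.range (Nat.card ι - r + 1)),
          Nat.card K ^ (∑ i : Fin r, (i.val + 1) * j i) := by
  obtain ⟨d, hd⟩ := Nat.exists_eq_add_of_le hr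
  let e : ι ≃ Fin (r + d) := Finite.equivFinOfCardEq hd
  have rows : {A : Matrix ι κ K // A.rank = r} ≃
      {v : Fin (r + d) → κ → K // Set.finrank K (Set.range v) = r} :=
    (Matrix.of.symm.trans (e.arrowCongr (Equiv.refl (κ → K)))).subtypeEquiv fun A => by
      have range_eq : Set.range (A.row ∘ e.symm) = Set.range A.row := e.symm.surjective.range_comp _
      rw [Matrix.rank_eq_finrank_span_row, ← range_eq]
      rfl
  rw [Nat.card_congr rows, natCard_tuples_finrank_eq, boundedMonomialSum_pow, Nat.card_fun, hd,
    Nat.add_sub_cancel_left, boundedTuples]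

theorem count_matrices_of_rank
    (p m n r : ℕ) (hp : p.Prime) (hr : r ≤ m) :
    Nat.card {A : Matrix (Fin m) (Fin n) (ZMod p) // A.rank = r} =
      (∏ j ∈ Finset.range r, (p ^ n - p ^ j)) *
        ∑ j ∈ Finset.filter (fun j : Fin r → ℕ => ∑ i, j i ≤ m - r)
            (Fintype.piFinset fun _ : Fin r => Finset.range (m - r + 1)),
          p ^ (∑ i : Fin r, (i.val + 1) * j i) := by
  have : Fact p.Prime := ⟨hp⟩
  simpa only [Nat.card_zmod, Nat.card_fin] using
    count_matrices_of_rank_general (K := ZMod p) (ι := Fin m) (κ := Fin n) (by rwa [Nat.card_fin])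
end
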